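/- For every positive integer N there exist a finite set V, a map φ : V → Δ_3, three distinguished elements t_1, t_2, t_3 ∈ V with φ(t_i) = e_i for i = 1,2,3, a finite set E of unordered pairs of elements of V, and weights w : E → ℝ_{≥0}, such that: (a) the embedded volume satisfies ∑_{{u,v}∈E} w({u,v})·(1/2)·∑_{i=1}^3 |φ(u)_i − φ(v)_i| = 11N + 1; and (b) for every coloring f : V → {1,2,3} with f(t_i) = i for i = 1,2,3, the total weight of bichromatic edges satisfies ∑_{{u,v}∈E, f(u)≠f(v)} w({u,v}) ≥ 12N. (Hence the integrality gap of the geometric relaxation of 3-way cut is at least 12N/(11N+1).) -/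

import Mathlib

/-- The length of the segment between the embedded endpoints of an unordered pair,
i.e. half the `L1` distance between the embedded endpoints. -/
noncomputable def edgeLength {V : Type} (φ : V → Fin 3 → ℝ) : Sym2 V → ℝ :=
  Sym2.lift ⟨fun u v => (1 / 2) * ∑ i, |φ u i - φ v i|,
    fun u v => by
      have : ∑ i, |φ u i - φ v i| = ∑ i, |φ v i - φ u i| :=
        Finset.sum_congr rfl fun i _ => abs_sub_comm _ _
      show (1:ℝ) / 2 * ∑ i, |φ u i - φ v i| = (1:ℝ) / 2 * ∑ i, |φ v i - φ u i|
      rw [this]⟩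

/-- Indicator that an unordered pair is bichromatic under a coloring `f`. -/
def bichromatic {V : Type} (f : V → Fin 3) : Sym2 V → ℝ :=
  Sym2.lift ⟨fun u v => if f u = f v then 0 else 1,
    fun u v => by by_cases h : f u = f v <;> simp [h, eq_comm]⟩

open Finset in
theorem steiner_aux {X ι : Type} (I : Finset ι) (x y : ι → X) (W : ι → ℤ)
    (hW : ∀ e ∈ I, 0 ≤ W e) (s : Fin 3 → X) (d : Fin 3 → X → ℤ) (C : ℤ)
    (hd0 : ∀ i, d i (s i) ≤ 0)
    (hd : ∀ e ∈ I, ∀ i, |d i (x e) - d i (y e)| ≤ W e)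
    (hC : ∀ v, C ≤ d 0 v + d 1 v + d 2 v)
    (hconn : ∀ K : X → Prop, (∀ e ∈ I, (K (x e) ↔ K (y e))) →
      ∀ i, K (s i) → ∃ j, j ≠ i ∧ K (s j)) :
    C ≤ ∑ e ∈ I, W e := by
  classical
  let G : SimpleGraph X := SimpleGraph.fromRel (fun u v => ∃ e ∈ I, x e = u ∧ y e = v)
  let ω : Sym2 X → ℤ := fun z => ∑ e ∈ I, if s(x e, y e) = z then W e else 0
  have hωnn : ∀ z, 0 ≤ ω z := fun z => Finset.sum_nonneg fun e he => by
    split_ifs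
    · exact hW e he
    · exact le_rfl
  have hω : ∀ e ∈ I, W e ≤ ω s(x e, y e) := by
    intro e he
    have h1 : (if s(x e, y e) = s(x e, y e) then W e else 0) ≤ ω s(x e, y e) :=
      Finset.single_le_sum (f := fun e' => if s(x e', y e') = s(x e, y e) then W e' else 0)
        (fun e' he' => by
          split_ifs
          · exact hW e' he'
          · exact le_rfl) he
    simpa using h1
  have htot : ∀ Z : Finset (Sym2 X), ∑ z ∈ Z, ω z ≤ ∑ e ∈ I, W e := by
    intro Z
    simp only [ω]
    rw [Finset.sum_comm]
    refine Finset.sum_le_sum fun e he => ?_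
    rw [Finset.sum_ite_eq]
    split_ifs
    · exact le_rfl
    · exact hW e he
  have hadj : ∀ u v, G.Adj u v → ∀ i, d i v - d i u ≤ ω s(u, v) := by
    intro u v h i
    rw [SimpleGraph.fromRel_adj] at h
    obtain ⟨_, ⟨e, he, rfl, rfl⟩ | ⟨e, he, rfl, rfl⟩⟩ := h
    · have := hd e he i
      have h2 := hω e he
      rw [abs_le] at this
      linarith
    · have := hd e he i
      have h2 := hω e he
      rw [abs_le] at this
      rw [Sym2.eq_swap]
      linarith
  have hwalk : ∀ {u v : X} (p : G.Walk u v) (i), d i v - d i u ≤ (p.edges.map ω).sum := by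
    intro u v p i
    induction p with
    | nil => simp
    | cons h q ih =>
      have := hadj _ _ h i
      simp only [SimpleGraph.Walk.edges_cons, List.map_cons, List.sum_cons]
      linarith
  have hreach : ∀ u, ∀ e ∈ I, (G.Reachable u (x e) ↔ G.Reachable u (y e)) := by
    intro u e he
    by_cases hxy : x e = y e
    · rw [hxy]
    · have ha : G.Adj (x e) (y e) := by
        rw [SimpleGraph.fromRel_adj]
        exact ⟨hxy, Or.inl ⟨e, he, rfl, rfl⟩⟩
      exact ⟨fun h => h.trans ha.reachable, fun h => h.trans ha.symm.reachable⟩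
  have hr : ∀ i, ∃ j, j ≠ i ∧ G.Reachable (s i) (s j) := fun i =>
    hconn (fun v => G.Reachable (s i) v) (hreach (s i)) i (SimpleGraph.Reachable.refl _)
  have hall : G.Reachable (s 0) (s 1) ∧ G.Reachable (s 2) (s 0) := by
    obtain ⟨j0, h0, r0⟩ := hr 0
    obtain ⟨j1, h1, r1⟩ := hr 1
    obtain ⟨j2, h2, r2⟩ := hr 2
    fin_cases j0 <;> fin_cases j1 <;> fin_cases j2 <;> simp at h0 h1 h2 r0 r1 r2 <;>
      first
      | exact ⟨r0, r2⟩
      | exact ⟨r0, r2.trans r0.symm⟩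
      | exact ⟨r1.symm, r2⟩
      | exact ⟨r0.trans r2, r0.symm⟩
      | exact ⟨r0.trans r1.symm, r0.symm⟩
  obtain ⟨⟨P0⟩, ⟨Q0⟩⟩ := hall
  let P := P0.bypass
  have hP : P.IsPath := P0.bypass_isPath
  -- first hitting
  have hhit : ∀ (S : Set X) {u v : X} (q : G.Walk u v), v ∈ S →
      ∃ c ∈ S, ∃ q' : G.Walk u c, ∀ z ∈ q'.edges, ∃ a ∈ z, a ∉ S := by
    intro S u v q hv
    induction q with
    | nil => exact ⟨_, hv, SimpleGraph.Walk.nil, by simp⟩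
    | @cons u v w h q ih =>
      by_cases hu : u ∈ S
      · exact ⟨u, hu, SimpleGraph.Walk.nil, by simp⟩
      · obtain ⟨c, hc, q', hq'⟩ := ih hv
        refine ⟨c, hc, SimpleGraph.Walk.cons h q', ?_⟩
        intro z hz
        rw [SimpleGraph.Walk.edges_cons, List.mem_cons] at hz
        rcases hz with rfl | hz
        · exact ⟨u, by simp, hu⟩
        · exact hq' z hz
  obtain ⟨c, hc, q', hq'⟩ := hhit {v | v ∈ P.support} Q0 (by simp)
  let Q := q'.bypass
  have hQ : Q.IsPath := q'.bypass_isPath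
  have hQe : ∀ z ∈ Q.edges, ∃ a ∈ z, a ∉ P.support := fun z hz =>
    hq' z (q'.edges_bypass_subset_edges hz)
  have hcP : c ∈ P.support := hc
  have hdisj : Disjoint P.edges.toFinset Q.edges.toFinset := by
    rw [Finset.disjoint_left]
    intro z hz hz'
    rw [List.mem_toFinset] at hz hz'
    obtain ⟨a, ha, hn⟩ := hQe z hz'
    exact hn (P.mem_support_of_mem_edges hz ha)
  have hsum := htot (P.edges.toFinset ∪ Q.edges.toFinset)
  rw [Finset.sum_union hdisj, List.sum_toFinset _ hP.isTrail.edges_nodup,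
    List.sum_toFinset _ hQ.isTrail.edges_nodup] at hsum
  have hsplit : P.edges = (P.takeUntil c hcP).edges ++ (P.dropUntil c hcP).edges := by
    rw [← SimpleGraph.Walk.edges_append, SimpleGraph.Walk.take_spec]
  rw [hsplit, List.map_append, List.sum_append] at hsum
  have e0 := hwalk (P.takeUntil c hcP) 0
  have e1 := hwalk (P.dropUntil c hcP).reverse 1
  have e2 := hwalk Q 2
  rw [SimpleGraph.Walk.edges_reverse, List.map_reverse, List.sum_reverse] at e1
  have := hC c
  have := hd0 0
  have := hd0 1
  have := hd0 2
  linarith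

/-- Sum over triples with sum `n`. -/
def triSum {A : Type} [AddCommMonoid A] (n : ℕ) (h : ℕ → ℕ → ℕ → A) : A :=
  ∑ x ∈ Finset.HasAntidiagonal.antidiagonal n, ∑ y ∈ Finset.HasAntidiagonal.antidiagonal x.2, h x.1 y.1 y.2

theorem triSum_split0 {A : Type} [AddCommMonoid A] (n : ℕ) (h : ℕ → ℕ → ℕ → A) :
    triSum (n + 1) h = (∑ y ∈ Finset.HasAntidiagonal.antidiagonal (n + 1), h 0 y.1 y.2) +
      triSum n (fun a b c => h (a + 1) b c) := by
  unfold triSum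
  rw [Finset.Nat.sum_antidiagonal_succ]

theorem triSum_split1 {A : Type} [AddCommMonoid A] (n : ℕ) (h : ℕ → ℕ → ℕ → A) :
    triSum (n + 1) h = (∑ y ∈ Finset.HasAntidiagonal.antidiagonal (n + 1), h y.1 0 y.2) +
      triSum n (fun a b c => h a (b + 1) c) := by
  unfold triSum
  rw [Finset.Nat.sum_antidiagonal_succ',
    Finset.Nat.sum_antidiagonal_succ' (n := n) (f := fun y => h y.1 0 y.2)]
  simp only [Finset.Nat.sum_antidiagonal_succ, Finset.sum_add_distrib]
  simp [add_assoc]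

theorem triSum_split2 {A : Type} [AddCommMonoid A] (n : ℕ) (h : ℕ → ℕ → ℕ → A) :
    triSum (n + 1) h = (∑ y ∈ Finset.HasAntidiagonal.antidiagonal (n + 1), h y.1 y.2 0) +
      triSum n (fun a b c => h a b (c + 1)) := by
  unfold triSum
  rw [Finset.Nat.sum_antidiagonal_succ']
  simp only [Finset.Nat.sum_antidiagonal_succ', Finset.sum_add_distrib]
  simp [add_assoc]

theorem triSum_congr {A : Type} [AddCommMonoid A] (n : ℕ) (h h' : ℕ → ℕ → ℕ → A)
    (H : ∀ a b c, a + b + c = n → h a b c = h' a b c) : triSum n h = triSum n h' := by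
  unfold triSum
  refine Finset.sum_congr rfl fun x hx => Finset.sum_congr rfl fun y hy => ?_
  rw [Finset.HasAntidiagonal.mem_antidiagonal] at hx hy
  exact H _ _ _ (by omega)

theorem triSum_add {A : Type} [AddCommMonoid A] (n : ℕ) (h h' : ℕ → ℕ → ℕ → A) :
    triSum n (fun a b c => h a b c + h' a b c) = triSum n h + triSum n h' := by
  simp [triSum, Finset.sum_add_distrib]

theorem triSum_swap01 {A : Type} [AddCommMonoid A] (n : ℕ) : ∀ (h : ℕ → ℕ → ℕ → A),
    triSum n (fun a b c => h b a c) = triSum n h := by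
  induction n with
  | zero => intro h; simp [triSum]
  | succ n ih =>
    intro h
    rw [triSum_split0, triSum_split1 n h, ← ih (fun a b c => h a (b + 1) c)]

theorem triSum_swap02 {A : Type} [AddCommMonoid A] (n : ℕ) : ∀ (h : ℕ → ℕ → ℕ → A),
    triSum n (fun a b c => h c b a) = triSum n h := by
  induction n with
  | zero => intro h; simp [triSum]
  | succ n ih =>
    intro h
    rw [triSum_split0, triSum_split2 n h, ← ih (fun a b c => h a b (c + 1))]
    congr 1
    rw [← Finset.Nat.sum_antidiagonal_swap]
    simp

theorem telescope_anti (n : ℕ) (F : ℕ → ℕ → ℤ) :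
    ∑ y ∈ Finset.HasAntidiagonal.antidiagonal n, (F y.1 (y.2 + 1) - F (y.1 + 1) y.2)
      = F 0 (n + 1) - F (n + 1) 0 := by
  have h1 := Finset.Nat.sum_antidiagonal_succ (n := n) (f := fun y => F y.1 y.2)
  have h2 := Finset.Nat.sum_antidiagonal_succ' (n := n) (f := fun y => F y.1 y.2)
  rw [Finset.sum_sub_distrib]
  simp only at h1 h2
  linarith

inductive Nd : Type
  | s (k : Fin 3) : Nd
  | U (a b c : ℕ) : Nd
  | D (a b c : ℕ) : Nd

/-- The second dual endpoint of the edge of direction `k` of the up-triangle `(a,b,c)`. -/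
def yEnd (a b c : ℕ) (k : Fin 3) : Nd :=
  if k = 0 then (if a = 0 then Nd.s 0 else Nd.D (a - 1) b c)
  else if k = 1 then (if b = 0 then Nd.s 1 else Nd.D a (b - 1) c)
  else (if c = 0 then Nd.s 2 else Nd.D a b (c - 1))

/-- First primal endpoint. -/
def e1 {A : Type} (F : ℕ → ℕ → ℕ → A) (a b c : ℕ) (k : Fin 3) : A :=
  if k = 0 then F a (b + 1) c else if k = 1 then F a b (c + 1) else F (a + 1) b c

/-- Second primal endpoint. -/
def e2 {A : Type} (F : ℕ → ℕ → ℕ → A) (a b c : ℕ) (k : Fin 3) : A :=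
  if k = 0 then F a b (c + 1) else if k = 1 then F (a + 1) b c else F a (b + 1) c

open Classical in
theorem stokes (M : ℕ) (F : ℕ → ℕ → ℕ → ℤ) (K : Nd → Prop)
    (hK : ∀ a b c, a + b + c = M + 1 → ∀ k, e1 F a b c k ≠ e2 F a b c k →
      (K (Nd.U a b c) ↔ K (yEnd a b c k))) :
    (if K (Nd.s 0) then F 0 0 (M + 2) - F 0 (M + 2) 0 else 0) +
    (if K (Nd.s 1) then F (M + 2) 0 0 - F 0 0 (M + 2) else 0) +
    (if K (Nd.s 2) then F 0 (M + 2) 0 - F (M + 2) 0 0 else 0) = 0 := by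
  set g0 : ℕ → ℕ → ℕ → ℤ := fun a b c =>
    if K (Nd.U a b c) then F a b (c + 1) - F a (b + 1) c else 0 with hg0
  set g1 : ℕ → ℕ → ℕ → ℤ := fun a b c =>
    if K (Nd.U a b c) then F (a + 1) b c - F a b (c + 1) else 0 with hg1
  set g2 : ℕ → ℕ → ℕ → ℤ := fun a b c =>
    if K (Nd.U a b c) then F a (b + 1) c - F (a + 1) b c else 0 with hg2
  have k0 : ∀ a b c, a + b + c = M + 1 → g0 a b c =
      if K (yEnd a b c 0) then F a b (c + 1) - F a (b + 1) c else 0 := by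
    intro a b c h
    by_cases he : F a (b + 1) c = F a b (c + 1)
    · simp [hg0, he]
    · have := hK a b c h 0 (by simpa [e1, e2] using he)
      simp only [hg0, this]
  have k1 : ∀ a b c, a + b + c = M + 1 → g1 a b c =
      if K (yEnd a b c 1) then F (a + 1) b c - F a b (c + 1) else 0 := by
    intro a b c h
    by_cases he : F a b (c + 1) = F (a + 1) b c
    · simp [hg1, he]
    · have := hK a b c h 1 (by simpa [e1, e2] using he)
      simp only [hg1, this]
  have k2 : ∀ a b c, a + b + c = M + 1 → g2 a b c =
      if K (yEnd a b c 2) then F a (b + 1) c - F (a + 1) b c else 0 := by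
    intro a b c h
    by_cases he : F (a + 1) b c = F a (b + 1) c
    · simp [hg2, he]
    · have := hK a b c h 2 (by simpa [e1, e2] using he)
      simp only [hg2, this]
  have hup : triSum (M + 1) g0 + triSum (M + 1) g1 + triSum (M + 1) g2 = 0 := by
    rw [← triSum_add, ← triSum_add, triSum_congr _ _ (fun _ _ _ => 0)]
    · simp [triSum]
    · intro a b c _
      simp only [hg0, hg1, hg2]
      split_ifs <;> ring
  have hdown : triSum M (fun a b c => g0 (a + 1) b c) + triSum M (fun a b c => g1 a (b + 1) c)
      + triSum M (fun a b c => g2 a b (c + 1)) = 0 := by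
    rw [← triSum_add, ← triSum_add, triSum_congr _ _ (fun _ _ _ => 0)]
    · simp [triSum]
    · intro a b c h
      rw [k0 (a + 1) b c (by omega), k1 a (b + 1) c (by omega), k2 a b (c + 1) (by omega)]
      simp only [yEnd]
      simp
      split_ifs <;> ring
  rw [triSum_split0, triSum_split1, triSum_split2] at hup
  have b0 : ∑ y ∈ Finset.HasAntidiagonal.antidiagonal (M + 1), g0 0 y.1 y.2 =
      if K (Nd.s 0) then F 0 0 (M + 2) - F 0 (M + 2) 0 else 0 := by
    rw [Finset.sum_congr rfl (g := fun y : ℕ × ℕ =>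
      if K (Nd.s 0) then F 0 y.1 (y.2 + 1) - F 0 (y.1 + 1) y.2 else 0)]
    · have := telescope_anti (M + 1) (F 0)
      split_ifs
      · exact this
      · exact Finset.sum_const_zero
    · intro y hy
      rw [Finset.HasAntidiagonal.mem_antidiagonal] at hy
      rw [k0 0 y.1 y.2 (by omega)]
      simp [yEnd]
  have b1 : ∑ y ∈ Finset.HasAntidiagonal.antidiagonal (M + 1), g1 y.1 0 y.2 =
      if K (Nd.s 1) then F (M + 2) 0 0 - F 0 0 (M + 2) else 0 := by
    rw [Finset.sum_congr rfl (g := fun y : ℕ × ℕ =>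
      if K (Nd.s 1) then F (y.1 + 1) 0 y.2 - F y.1 0 (y.2 + 1) else 0)]
    · have := telescope_anti (M + 1) (fun a c => - F a 0 c)
      simp only [neg_sub_neg] at this
      split_ifs
      · exact this
      · exact Finset.sum_const_zero
    · intro y hy
      rw [Finset.HasAntidiagonal.mem_antidiagonal] at hy
      rw [k1 y.1 0 y.2 (by omega)]
      simp [yEnd]
  have b2 : ∑ y ∈ Finset.HasAntidiagonal.antidiagonal (M + 1), g2 y.1 y.2 0 =
      if K (Nd.s 2) then F 0 (M + 2) 0 - F (M + 2) 0 0 else 0 := by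
    rw [Finset.sum_congr rfl (g := fun y : ℕ × ℕ =>
      if K (Nd.s 2) then F y.1 (y.2 + 1) 0 - F (y.1 + 1) y.2 0 else 0)]
    · have := telescope_anti (M + 1) (fun a b => F a b 0)
      split_ifs
      · exact this
      · exact Finset.sum_const_zero
    · intro y hy
      rw [Finset.HasAntidiagonal.mem_antidiagonal] at hy
      rw [k2 y.1 y.2 0 (by omega)]
      simp [yEnd]
  rw [← b0, ← b1, ← b2]
  linarith

/-- Weight of an edge in terms of the distance `x` to the parallel side. -/
def wz (m x y z : ℕ) : ℕ :=
  if x = 0 then 2 * m + 2 + (y - 2 * m) + (z - 2 * m) else if x ≤ 2 * m then 1 else 0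

/-- Weight of the direction `k` edge of the up-triangle `(a,b,c)`. -/
def wt (m a b c : ℕ) (k : Fin 3) : ℕ :=
  if k = 0 then wz m a b c else if k = 1 then wz m b a c else wz m c a b

def du (m x y z : ℕ) : ℕ := 2 * m + 2 + 2 * min x (2 * m) + (y - 2 * m) + (z - 2 * m)

def dd (m x y z : ℕ) : ℕ := 2 * m + 2 + min (2 * x + 1) (4 * m) + (y - 2 * m) + (z - 2 * m)

/-- Potentials on dual nodes. -/
def pot (m : ℕ) (i : Fin 3) : Nd → ℤ
  | Nd.s k => if i = k then 0 else 6 * m + 2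
  | Nd.U a b c => if a + b + c + 1 = 3 * m then
      (((if i = 0 then du m a b c else if i = 1 then du m b a c else du m c a b) : ℕ) : ℤ)
      else 12 * m + 4
  | Nd.D a b c => if a + b + c + 2 = 3 * m then
      (((if i = 0 then dd m a b c else if i = 1 then dd m b a c else dd m c a b) : ℕ) : ℤ)
      else 12 * m + 4

theorem pot_sum (m : ℕ) (hm : 1 ≤ m) (v : Nd) :
    (12 * m + 4 : ℤ) ≤ pot m 0 v + pot m 1 v + pot m 2 v := by
  cases v with
  | s k => fin_cases k <;> simp [pot] <;> omega
  | U a b c =>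
    simp only [pot]
    split_ifs <;> simp_all [du] <;> omega
  | D a b c =>
    simp only [pot]
    split_ifs <;> simp_all [dd] <;> omega

theorem pot_edge (m a b c : ℕ) (h : a + b + c + 1 = 3 * m) (k i : Fin 3) :
    |pot m i (Nd.U a b c) - pot m i (yEnd a b c k)| ≤ (wt m a b c k : ℤ) := by
  rw [abs_le]
  have hk : k = 0 ∨ k = 1 ∨ k = 2 := by omega
  have hi : i = 0 ∨ i = 1 ∨ i = 2 := by omega
  have key0 : ∀ x y z, x + y + z + 1 = 3 * m → x ≠ 0 →
      ((du m x y z : ℤ) - dd m (x - 1) y z ≤ wz m x y z ∧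
       (dd m (x - 1) y z : ℤ) - du m x y z ≤ wz m x y z) ∧
      ((du m y x z : ℤ) - dd m y (x - 1) z ≤ wz m x y z ∧
       (dd m y (x - 1) z : ℤ) - du m y x z ≤ wz m x y z) := by
    intro x y z h hx
    simp only [du, dd, wz, hx, if_false]
    split_ifs <;> omega
  have key1 : ∀ y z, y + z + 1 = 3 * m →
      ((du m 0 y z : ℤ) ≤ wz m 0 y z ∧
       (du m y 0 z : ℤ) - (6 * m + 2) ≤ wz m 0 y z ∧
       (6 * m + 2) - (du m y 0 z : ℤ) ≤ wz m 0 y z) := by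
    intro y z h
    simp only [du, wz, if_true]
    omega
  have su : ∀ x y z, du m x y z = du m x z y := by intro x y z; simp only [du]; omega
  have sd : ∀ x y z, dd m x y z = dd m x z y := by intro x y z; simp only [dd]; omega
  have sw : ∀ x y z, wz m x y z = wz m x z y := by
    intro x y z; simp only [wz]; split_ifs <;> omega
  have hpU : ∀ i, pot m i (Nd.U a b c) =
      (((if i = 0 then du m a b c else if i = 1 then du m b a c else du m c a b) : ℕ) : ℤ) := by
    intro i; simp only [pot, h, if_true]
  rw [hpU]
  rcases hk with rfl | rfl | rfl
  · by_cases h0 : a = 0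
    · subst h0
      have A := key1 b c (by omega)
      have B := key1 c b (by omega)
      rw [sw 0 c b] at B
      rcases hi with rfl | rfl | rfl <;> simp [yEnd, pot, wt] <;> constructor <;> omega
    · have A := key0 a b c (by omega) h0
      have B := key0 a c b (by omega) h0
      rw [sw a c b] at B
      have e : a - 1 + b + c + 2 = 3 * m := by omega
      rcases hi with rfl | rfl | rfl <;> simp [yEnd, pot, wt, h0, e] <;> constructor <;> omega
  · by_cases h0 : b = 0
    · subst h0
      have A := key1 a c (by omega)
      have B := key1 c a (by omega)
      rw [sw 0 c a] at B
      rw [su c 0 a] at B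
      rcases hi with rfl | rfl | rfl <;> simp [yEnd, pot, wt] <;> constructor <;> omega
    · have A := key0 b a c (by omega) h0
      have B := key0 b c a (by omega) h0
      rw [sw b c a, su c b a, sd c (b - 1) a] at B
      have e : a + (b - 1) + c + 2 = 3 * m := by omega
      rcases hi with rfl | rfl | rfl <;> simp [yEnd, pot, wt, h0, e] <;> constructor <;> omega
  · by_cases h0 : c = 0
    · subst h0
      have A := key1 a b (by omega)
      have B := key1 b a (by omega)
      rw [sw 0 b a] at B
      rw [su b 0 a] at B
      rw [su a 0 b] at A
      rcases hi with rfl | rfl | rfl <;> simp [yEnd, pot, wt] <;> constructor <;> omega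
    · have A := key0 c a b (by omega) h0
      have B := key0 c b a (by omega) h0
      rw [sw c b a, su b c a, sd b (c - 1) a] at B
      rw [su a c b, sd a (c - 1) b] at A
      have e : a + b + (c - 1) + 2 = 3 * m := by omega
      rcases hi with rfl | rfl | rfl <;> simp [yEnd, pot, wt, h0, e] <;> constructor <;> omega

/-- index set of edges -/
def edgeIdx (n : ℕ) : Finset (((_ : ℕ × ℕ) × (ℕ × ℕ)) × Fin 3) :=
  ((Finset.HasAntidiagonal.antidiagonal n).sigma
    fun x => Finset.HasAntidiagonal.antidiagonal x.2) ×ˢ Finset.univ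

theorem sum_edgeIdx {A : Type} [AddCommMonoid A] (n : ℕ) (h : ℕ → ℕ → ℕ → Fin 3 → A) :
    ∑ z ∈ edgeIdx n, h z.1.1.1 z.1.2.1 z.1.2.2 z.2
      = triSum n (fun a b c => ∑ k, h a b c k) := by
  unfold edgeIdx triSum
  rw [Finset.sum_product, Finset.sum_sigma]

theorem mem_edgeIdx {n : ℕ} {z : ((_ : ℕ × ℕ) × (ℕ × ℕ)) × Fin 3} (hz : z ∈ edgeIdx n) :
    z.1.1.1 + z.1.2.1 + z.1.2.2 = n := by
  simp [edgeIdx] at hz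
  omega

theorem mincut (m : ℕ) (hm : 1 ≤ m) (F : ℕ → ℕ → ℕ → Fin 3)
    (h0 : F (3 * m) 0 0 = 0) (h1 : F 0 (3 * m) 0 = 1) (h2 : F 0 0 (3 * m) = 2) :
    (12 * m + 4 : ℤ) ≤ ∑ z ∈ edgeIdx (3 * m - 1),
      (if e1 F z.1.1.1 z.1.2.1 z.1.2.2 z.2 = e2 F z.1.1.1 z.1.2.1 z.1.2.2 z.2 then 0
        else (wt m z.1.1.1 z.1.2.1 z.1.2.2 z.2 : ℤ)) := by
  classical
  obtain ⟨M, hM⟩ : ∃ M, 3 * m = M + 2 := ⟨3 * m - 2, by omega⟩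
  have hM1 : 3 * m - 1 = M + 1 := by omega
  rw [hM1]
  have hflip : ∀ z ∈ edgeIdx (M + 1), (if e1 F z.1.1.1 z.1.2.1 z.1.2.2 z.2 = e2 F z.1.1.1 z.1.2.1 z.1.2.2 z.2 then 0
        else (wt m z.1.1.1 z.1.2.1 z.1.2.2 z.2 : ℤ)) =
        if e1 F z.1.1.1 z.1.2.1 z.1.2.2 z.2 ≠ e2 F z.1.1.1 z.1.2.1 z.1.2.2 z.2 then
        (wt m z.1.1.1 z.1.2.1 z.1.2.2 z.2 : ℤ) else 0 := by
    intro z _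
    split_ifs <;> simp_all
  rw [Finset.sum_congr rfl hflip, ← Finset.sum_filter]
  refine steiner_aux _ (fun z => Nd.U z.1.1.1 z.1.2.1 z.1.2.2)
    (fun z => yEnd z.1.1.1 z.1.2.1 z.1.2.2 z.2) _ ?_ Nd.s (pot m) _ ?_ ?_ (pot_sum m hm) ?_
  · intro e _
    positivity
  · intro i
    simp [pot]
  · intro e he i
    have := mem_edgeIdx (Finset.mem_of_mem_filter e he)
    exact pot_edge m _ _ _ (by omega) _ _
  · intro K hK i hi
    have hst := stokes M (fun a b c => ((F a b c : ℕ) : ℤ)) K (by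
      intro a b c habc k hne
      refine hK ⟨⟨(a, b + c), (b, c)⟩, k⟩ ?_
      rw [Finset.mem_filter]
      constructor
      · simp [edgeIdx]
        omega
      · intro heq
        apply hne
        simp only [e1, e2] at heq ⊢
        split_ifs at heq ⊢ <;> simp_all)
    simp only [← hM, h0, h1, h2] at hst
    by_contra hcon
    push Not at hcon
    have hi3 : i = 0 ∨ i = 1 ∨ i = 2 := by omega
    rcases hi3 with rfl | rfl | rfl
    · have a1 := hcon 1 (by decide)
      have a2 := hcon 2 (by decide)
      simp [hi, a1, a2] at hst
    · have a1 := hcon 0 (by decide)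
      have a2 := hcon 2 (by decide)
      simp [hi, a1, a2] at hst
    · have a1 := hcon 0 (by decide)
      have a2 := hcon 1 (by decide)
      simp [hi, a1, a2] at hst

theorem sum_e (m : ℕ) (hm : 1 ≤ m) :
    2 * ∑ j ∈ Finset.range (3 * m), (((j - 2 * m : ℕ) : ℕ) : ℤ) = (m : ℤ) * (m - 1) := by
  have : 3 * m = 2 * m + m := by omega
  rw [this, Finset.sum_range_add, Finset.sum_eq_zero]
  · simp only [Nat.add_sub_cancel_left]
    have h := Finset.sum_range_id_mul_two m
    have h2 : ((∑ i ∈ Finset.range m, i : ℕ) : ℤ) * 2 = ((m * (m - 1) : ℕ) : ℤ) := by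
      exact_mod_cast h
    push_cast [Nat.cast_sub hm] at h2
    linarith
  · intro j hj
    rw [Finset.mem_range] at hj
    simp
    omega

theorem sum_ind (m : ℕ) (hm : 1 ≤ m) :
    triSum (3 * m - 2) (fun a _ _ => if a + 1 ≤ 2 * m then (1 : ℤ) else 0)
      = 4 * m ^ 2 - m := by
  unfold triSum
  simp only [Finset.sum_const, Finset.Nat.card_antidiagonal]
  rw [Finset.Nat.sum_antidiagonal_eq_sum_range_succ_mk]
  have h1 : (3 * m - 2).succ = 2 * m + (m - 1) := by omega
  rw [h1, Finset.sum_range_add]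
  rw [Finset.sum_eq_zero (s := Finset.range (m - 1))]
  · have h3 : ∀ j, j ≤ 2 * m → 2 * ∑ x ∈ Finset.range j, (3 * m - 2 - x + 1) •
        (if x + 1 ≤ 2 * m then (1 : ℤ) else 0) = 6 * m * j - j * (j + 1) := by
      intro j
      induction j with
      | zero => simp
      | succ j ih =>
        intro hj
        rw [Finset.sum_range_succ, mul_add, ih (by omega), if_pos hj]
        have : ((3 * m - 2 - j + 1 : ℕ) : ℤ) = 3 * m - 1 - j := by omega
        rw [nsmul_eq_mul, this]
        push_cast
        ring
    have := h3 (2 * m) le_rfl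
    push_cast at this
    simp only at *
    linarith
  · intro j _
    rw [if_neg (by omega)]
    simp

theorem sum_wz (m : ℕ) (hm : 1 ≤ m) :
    triSum (3 * m - 1) (fun a b c => (wz m a b c : ℤ)) = 11 * m ^ 2 + 4 * m := by
  obtain ⟨M, hM⟩ : ∃ M, 3 * m = M + 2 := ⟨3 * m - 2, by omega⟩
  have hM1 : 3 * m - 1 = M + 1 := by omega
  have hM2 : 3 * m - 2 = M := by omega
  have hi := sum_ind m hm
  rw [hM2] at hi
  rw [hM1, triSum_split0]
  have : triSum M (fun a b c => (wz m (a + 1) b c : ℤ)) = 4 * m ^ 2 - m := by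
    rw [← hi]
    apply triSum_congr
    intro a b c _
    simp [wz]
  rw [this]
  simp only [wz, if_true]
  push_cast
  simp only [Finset.sum_add_distrib, Finset.sum_const, Finset.Nat.card_antidiagonal]
  have e := sum_e m hm
  have s1 : ∑ x ∈ Finset.HasAntidiagonal.antidiagonal (M + 1), ((x.1 - 2 * m : ℕ) : ℤ) =
      ∑ j ∈ Finset.range (3 * m), ((j - 2 * m : ℕ) : ℤ) := by
    rw [Finset.Nat.sum_antidiagonal_eq_sum_range_succ_mk, hM]
  have s2 : ∑ x ∈ Finset.HasAntidiagonal.antidiagonal (M + 1), ((x.2 - 2 * m : ℕ) : ℤ) =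
      ∑ j ∈ Finset.range (3 * m), ((j - 2 * m : ℕ) : ℤ) := by
    rw [← s1, ← Finset.Nat.sum_antidiagonal_swap]
    simp
  rw [s1, s2]
  have hMz : (M : ℤ) = 3 * m - 2 := by omega
  simp only [nsmul_eq_mul]
  push_cast
  rw [hMz]
  linarith

theorem sum_wt (m : ℕ) (hm : 1 ≤ m) :
    ∑ z ∈ edgeIdx (3 * m - 1), (wt m z.1.1.1 z.1.2.1 z.1.2.2 z.2 : ℤ) = 33 * m ^ 2 + 12 * m := by
  rw [sum_edgeIdx (3 * m - 1) (fun a b c k => (wt m a b c k : ℤ))]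
  simp only [Fin.sum_univ_three]
  rw [triSum_add, triSum_add]
  have h0 := sum_wz m hm
  have h1 := triSum_swap01 (3 * m - 1) (fun a b c => (wz m a b c : ℤ))
  have h2 := triSum_swap02 (3 * m - 1) (fun a b c => (wz m a b c : ℤ))
  have sw : ∀ x y z, wz m x y z = wz m x z y := by
    intro x y z; simp only [wz]; split_ifs <;> omega
  have g0 : triSum (3 * m - 1) (fun a b c => (wt m a b c 0 : ℤ)) = 11 * m ^ 2 + 4 * m := h0
  have g1 : triSum (3 * m - 1) (fun a b c => (wt m a b c 1 : ℤ)) = 11 * m ^ 2 + 4 * m :=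
    h1.trans h0
  have g2 : triSum (3 * m - 1) (fun a b c => (wt m a b c 2 : ℤ)) = 11 * m ^ 2 + 4 * m := by
    rw [← h0, ← h2]
    apply triSum_congr
    intro a b c _
    rw [sw c b a]
    rfl
  rw [g0, g1, g2]
  ring

theorem sum_univ_lift {V ι : Type} [Fintype V] [DecidableEq V] (I : Finset ι) (ed : ι → Sym2 V)
    (W : ι → ℝ) (z0 : Sym2 V) (pad : ℝ) (g : Sym2 V → ℝ) :
    ∑ e : Sym2 V, ((∑ i ∈ I, if ed i = e then W i else 0) + if z0 = e then pad else 0) * g e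
      = (∑ i ∈ I, W i * g (ed i)) + pad * g z0 := by
  simp only [add_mul, Finset.sum_add_distrib, Finset.sum_mul, ite_mul, zero_mul]
  rw [Finset.sum_comm]
  simp

/-- grid vertex -/
def mkV (m a b _c : ℕ) : Fin (3 * m + 1) × Fin (3 * m + 1) :=
  (Fin.ofNat (3 * m + 1) a, Fin.ofNat (3 * m + 1) b)

noncomputable def phiV (m : ℕ) (v : Fin (3 * m + 1) × Fin (3 * m + 1)) : Fin 3 → ℝ :=
  if (v.1 : ℕ) + (v.2 : ℕ) ≤ 3 * m then
    ![((v.1 : ℕ) : ℝ) / (3 * m), ((v.2 : ℕ) : ℝ) / (3 * m),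
      ((3 * m - (v.1 : ℕ) - (v.2 : ℕ) : ℕ) : ℝ) / (3 * m)]
  else Pi.single 0 1

theorem phiV_mk (m a b c : ℕ) (h : a + b + c = 3 * m) :
    phiV m (mkV m a b c) = ![(a : ℝ) / (3 * m), (b : ℝ) / (3 * m), (c : ℝ) / (3 * m)] := by
  have ha : a % (3 * m + 1) = a := Nat.mod_eq_of_lt (by omega)
  have hb : b % (3 * m + 1) = b := Nat.mod_eq_of_lt (by omega)
  have hc : 3 * m - a - b = c := by omega
  simp only [phiV, mkV, Fin.val_ofNat, ha, hb, hc]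
  rw [if_pos (by omega)]

theorem phiV_mem (m : ℕ) (hm : 1 ≤ m) (v) : phiV m v ∈ stdSimplex ℝ (Fin 3) := by
  have hm' : (0 : ℝ) < m := by exact_mod_cast hm
  unfold phiV
  split_ifs with h
  · constructor
    · intro i
      fin_cases i <;> simp <;> positivity
    · have : (((v.1 : ℕ) : ℝ) + ((v.2 : ℕ) : ℝ) + ((3 * m - (v.1 : ℕ) - (v.2 : ℕ) : ℕ) : ℝ))
          = 3 * m := by
        have : (v.1 : ℕ) + (v.2 : ℕ) + (3 * m - (v.1 : ℕ) - (v.2 : ℕ) : ℕ) = 3 * m := by omega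
        exact_mod_cast this
      simp only [Fin.sum_univ_three, Matrix.cons_val_zero, Matrix.cons_val_one, Matrix.cons_val]
      rw [← add_div, ← add_div, this]
      field_simp
  · exact single_mem_stdSimplex ℝ 0

theorem len_edge (m : ℕ) (hm : 1 ≤ m) (a b c : ℕ) (h : a + b + c + 1 = 3 * m) (k : Fin 3) :
    edgeLength (phiV m) s(e1 (mkV m) a b c k, e2 (mkV m) a b c k) = 1 / (3 * m) := by
  have hm' : (0 : ℝ) < m := by exact_mod_cast hm
  have p1 := phiV_mk m (a + 1) b c (by omega)
  have p2 := phiV_mk m a (b + 1) c (by omega)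
  have p3 := phiV_mk m a b (c + 1) (by omega)
  have hx : ∀ x : ℝ, (x + 1) / (3 * m) - x / (3 * m) = 1 / (3 * m) := by intro x; ring
  have hy : ∀ x : ℝ, x / (3 * m) - (x + 1) / (3 * m) = -(1 / (3 * m)) := by intro x; ring
  have hp : |(1 / (3 * m) : ℝ)| = 1 / (3 * m) := abs_of_pos (by positivity)
  have hk : k = 0 ∨ k = 1 ∨ k = 2 := by omega
  simp only [edgeLength, Sym2.lift_mk, Fin.sum_univ_three]
  rcases hk with rfl | rfl | rfl
  · simp only [e1, e2, if_true, p2, p3]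
    simp only [Matrix.cons_val_zero, Matrix.cons_val_one, Matrix.cons_val, Nat.cast_add,
      Nat.cast_one, hx, hy, abs_neg, hp, sub_self, abs_zero]
    ring
  · simp only [e1, e2, one_ne_zero, if_false, if_true, p1, p3]
    simp only [Matrix.cons_val_zero, Matrix.cons_val_one, Matrix.cons_val, Nat.cast_add,
      Nat.cast_one, hx, hy, abs_neg, hp, sub_self, abs_zero]
    ring
  · have : (2 : Fin 3) ≠ 0 := by decide
    have : (2 : Fin 3) ≠ 1 := by decide
    simp only [e1, e2, *, if_false, p1, p2]
    simp only [Matrix.cons_val_zero, Matrix.cons_val_one, Matrix.cons_val, Nat.cast_add,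
      Nat.cast_one, hx, hy, abs_neg, hp, sub_self, abs_zero]
    ring

/-- For every positive integer `N` there is a weighted graph embedded in the
standard 2-simplex, with terminals mapped to the vertices of the simplex, whose embedded
volume is `11N + 1` while every 3-way cut (coloring separating the terminals) has total
bichromatic weight at least `12N`. Hence the integrality gap is at least `12N/(11N+1)`. -/
theorem exists_graph_integrality_gap (N : ℕ) (hN : 0 < N) :
    ∃ (V : Type) (_ : Fintype V) (φ : V → Fin 3 → ℝ) (t : Fin 3 → V)
      (E : Finset (Sym2 V)) (w : Sym2 V → ℝ),
      (∀ v : V, φ v ∈ stdSimplex ℝ (Fin 3)) ∧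
      (∀ i : Fin 3, φ (t i) = Pi.single i 1) ∧
      (∀ e ∈ E, 0 ≤ w e) ∧
      (∑ e ∈ E, w e * edgeLength φ e = 11 * (N : ℝ) + 1) ∧
      (∀ f : V → Fin 3, (∀ i : Fin 3, f (t i) = i) →
        12 * (N : ℝ) ≤ ∑ e ∈ E, bichromatic f e * w e) := by
  have hN' : (0 : ℝ) < N := by exact_mod_cast hN
  set t : Fin 3 → Fin (3 * N + 1) × Fin (3 * N + 1) :=
    ![mkV N (3 * N) 0 0, mkV N 0 (3 * N) 0, mkV N 0 0 (3 * N)] with ht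
  set lam : ℝ := 3 * N / (3 * N + 1) with hlam
  set pad : ℝ := (2 * N + 1) / (3 * N + 1) with hpad
  have hlam0 : 0 ≤ lam := by positivity
  have hpad0 : 0 ≤ pad := by positivity
  let ed : ((_ : ℕ × ℕ) × (ℕ × ℕ)) × Fin 3 → Sym2 (Fin (3 * N + 1) × Fin (3 * N + 1)) :=
    fun z => s(e1 (mkV N) z.1.1.1 z.1.2.1 z.1.2.2 z.2, e2 (mkV N) z.1.1.1 z.1.2.1 z.1.2.2 z.2)
  let W : ((_ : ℕ × ℕ) × (ℕ × ℕ)) × Fin 3 → ℝ :=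
    fun z => lam * ((wt N z.1.1.1 z.1.2.1 z.1.2.2 z.2 : ℤ) : ℝ)
  have hW : ∀ z, 0 ≤ W z := fun z => by
    simp only [W]
    positivity
  have hφt : ∀ i : Fin 3, phiV N (t i) = Pi.single i 1 := by
    have hne : (3 * N : ℝ) ≠ 0 := by positivity
    intro i
    fin_cases i <;> simp only [ht] <;> simp [phiV_mk] <;>
      (ext j; fin_cases j <;> simp [hN'.ne'])
  refine ⟨Fin (3 * N + 1) × Fin (3 * N + 1), inferInstance, phiV N, t, Finset.univ,
    fun e => (∑ z ∈ edgeIdx (3 * N - 1), if ed z = e then W z else 0) +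
      if s(t 0, t 1) = e then pad else 0, phiV_mem N hN, hφt, ?_, ?_, ?_⟩
  · intro e _
    refine add_nonneg (Finset.sum_nonneg fun z _ => ?_) ?_
    · split_ifs
      · exact hW z
      · exact le_rfl
    · split_ifs
      · exact hpad0
      · exact le_rfl
  · rw [sum_univ_lift]
    have h1 : ∀ z ∈ edgeIdx (3 * N - 1), W z * edgeLength (phiV N) (ed z)
        = lam / (3 * N) * ((wt N z.1.1.1 z.1.2.1 z.1.2.2 z.2 : ℤ) : ℝ) := by
      intro z hz
      have := mem_edgeIdx hz
      simp only [W, ed]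
      rw [len_edge N hN z.1.1.1 z.1.2.1 z.1.2.2 (by omega)]
      ring
    rw [Finset.sum_congr rfl h1, ← Finset.mul_sum, ← Int.cast_sum, sum_wt N hN]
    have h2 : edgeLength (phiV N) s(t 0, t 1) = 1 := by
      simp only [edgeLength, Sym2.lift_mk, Fin.sum_univ_three, hφt]
      simp
      norm_num
    rw [h2, hlam, hpad]
    push_cast
    field_simp
    ring
  · intro f hf
    simp only [mul_comm (bichromatic f _)]
    rw [sum_univ_lift]
    have hcut := mincut N hN (fun a b c => f (mkV N a b c)) (hf 0) (hf 1) (hf 2)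
    have h1 : ∀ z ∈ edgeIdx (3 * N - 1), W z * bichromatic f (ed z)
        = lam * (((if e1 (fun a b c => f (mkV N a b c)) z.1.1.1 z.1.2.1 z.1.2.2 z.2
            = e2 (fun a b c => f (mkV N a b c)) z.1.1.1 z.1.2.1 z.1.2.2 z.2 then 0
        else (wt N z.1.1.1 z.1.2.1 z.1.2.2 z.2 : ℤ)) : ℤ) : ℝ) := by
      intro z _
      have q1 : e1 (fun a b c => f (mkV N a b c)) z.1.1.1 z.1.2.1 z.1.2.2 z.2
          = f (e1 (mkV N) z.1.1.1 z.1.2.1 z.1.2.2 z.2) := by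
        simp only [e1]
        split_ifs <;> rfl
      have q2 : e2 (fun a b c => f (mkV N a b c)) z.1.1.1 z.1.2.1 z.1.2.2 z.2
          = f (e2 (mkV N) z.1.1.1 z.1.2.1 z.1.2.2 z.2) := by
        simp only [e2]
        split_ifs <;> rfl
      rw [q1, q2]
      simp only [W, ed, bichromatic, Sym2.lift_mk]
      split_ifs <;> simp
    rw [Finset.sum_congr rfl h1, ← Finset.mul_sum, ← Int.cast_sum]
    have h3 : ((12 * N + 4 : ℤ) : ℝ) ≤ _ := Int.cast_le.mpr hcut
    have h4 := mul_le_mul_of_nonneg_left h3 hlam0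
    have h5 : lam * ((12 * N + 4 : ℤ) : ℝ) = 12 * N := by
      rw [hlam]
      push_cast
      field_simp
      ring
    have h6 : 0 ≤ pad * bichromatic f s(t 0, t 1) := by
      refine mul_nonneg hpad0 ?_
      simp only [bichromatic, Sym2.lift_mk]
      split_ifs <;> norm_num
    rw [h5] at h4
    linarith
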